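/- Strong duality theorem: Let X = ∏_{i=1}^n [aᵢ, bᵢ] ⊂ ℝⁿ be a compact box with 0 ≤ aᵢ < bᵢ for each i, and let μ be a finite signed Borel measure on X with μ(X) = 0 and Jordan decomposition μ = μ₊ − μ₋ (the properties enjoyed by the transformed measure of a probability density on X). Then sup_{u ∈ 𝒰(X) ∩ ℒ₁(X)} ∫_X u dμ = inf over finite nonnegative Borel measures γ on X × X with γ₁ − γ₂ ≽_cvx μ of ∫_{X×X} ‖x − y‖₁ dγ(x,y); both the supremum and the infimum are achieved; moreover the infimum is achieved by some γ* satisfying γ₁*(X) = γ₂*(X) = μ₊(X), γ₁* ≽_cvx μ₊, and γ₂* ≼_cvx μ₋. -/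

import Mathlib

open MeasureTheory Set

/-- ℓ¹ distance on `Fin n → ℝ`. -/
noncomputable def l1dist {n : ℕ} (x y : Fin n → ℝ) : ℝ := ∑ i, |x i - y i|

/-- The box `∏ i, [a i, b i]` in `ℝⁿ`. -/
def box {n : ℕ} (a b : Fin n → ℝ) : Set (Fin n → ℝ) := {x | ∀ i, x i ∈ Set.Icc (a i) (b i)}

/-- `u ∈ 𝒰(X)`: continuous, coordinatewise nondecreasing and convex on `X`. -/
def memU {n : ℕ} (X : Set (Fin n → ℝ)) (u : (Fin n → ℝ) → ℝ) : Prop :=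
  ContinuousOn u X ∧ (∀ x ∈ X, ∀ y ∈ X, (∀ i, x i ≤ y i) → u x ≤ u y) ∧ ConvexOn ℝ X u

/-- `u ∈ ℒ₁(X)`: 1-Lipschitz with respect to the ℓ¹ norm on `X`. -/
def memL1 {n : ℕ} (X : Set (Fin n → ℝ)) (u : (Fin n → ℝ) → ℝ) : Prop :=
  ∀ x ∈ X, ∀ y ∈ X, u x - u y ≤ l1dist x y

/-!
Let `μ` and `ν` be the positive and the negative part of the signed measure. Weak duality chains the
constraint on the marginals with the Lipschitz bound. For the converse, the primal supremum `S` is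
attained by Arzelà–Ascoli on functions normalized to vanish at a point. Every plan `γ` of mass
`μ(X)` has, for each pair `v, w ∈ 𝒰(X)`, a slack
`(∫ v dγ₁ - ∫ v dμ) + (∫ w dν - ∫ w dγ₂) + (S - ∫ ‖x - y‖₁ dγ)`, which is the integral against the
normalized plan of a continuous function on `X × X`. These functions form a convex set, and none of
them is negative everywhere, because `w` may be compared with its infimal convolution with the `ℓ¹`
distance. That is the key point: this infimal convolution is again in `𝒰(X)` (monotone because `X`
is closed under coordinatewise minima, convex because the cost is jointly convex) and 1-Lipschitz,
hence a competitor in the primal problem. Hahn–Banach separates these functions from the strictly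
negative ones, and the separating positive functional is, by Riesz–Markov, a measure for which all
slacks are nonnegative. Since `v` and `w` range independently over a cone, each of the three
summands of the slack is nonnegative, which gives the two marginal inequalities and the cost bound.
-/

open scoped CompactlySupported

section Order

variable {𝕜 : Type*} [Field 𝕜] [LinearOrder 𝕜] [IsStrictOrderedRing 𝕜] {x s : 𝕜}

theorem nonpos_of_forall_pos_mul_le (h : ∀ t > 0, t * x ≤ s) : x ≤ 0 := by
  by_contra! hx
  have hle := h ((|s| + 1) / x) (by positivity)
  rw [div_mul_cancel₀ _ hx.ne'] at hle
  linarith [le_abs_self s]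

theorem nonneg_of_forall_pos_mul_le (h : ∀ t > 0, t * x ≤ s) : 0 ≤ s := by
  refine nonneg_of_neg_nonpos (nonpos_of_forall_pos_mul_le (s := -x) fun t ht => ?_)
  have hle := h t⁻¹ (inv_pos.mpr ht)
  rw [inv_mul_le_iff₀ ht] at hle
  linarith

end Order

section PositiveFunctional

variable {Y : Type*} [TopologicalSpace Y] [CompactSpace Y]

theorem le_norm_mul_map_one {Λ : C(Y, ℝ) →L[ℝ] ℝ} (hΛ : ∀ f, 0 ≤ f → 0 ≤ Λ f) (f : C(Y, ℝ)) :
    Λ f ≤ ‖f‖ * Λ 1 := by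
  have hf : 0 ≤ ‖f‖ • 1 - f := fun y => by
    simpa using f.apply_le_norm y
  simpa using hΛ _ hf

theorem exists_positive_functional_nonneg_on {B : Set C(Y, ℝ)} (hconv : Convex ℝ B)
    (hne : B.Nonempty) (hB : ∀ f ∈ B, ∃ y, 0 ≤ f y) :
    ∃ Λ : C(Y, ℝ) →L[ℝ] ℝ, (∀ f, 0 ≤ f → 0 ≤ Λ f) ∧ Λ 1 = 1 ∧ ∀ f ∈ B, 0 ≤ Λ f := by
  have hopen : IsOpen {f : C(Y, ℝ) | ∀ y, f y < 0} := by
    simpa [MapsTo] using ContinuousMap.isOpen_setOfPred_mapsTo (X := Y) isCompact_univ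
      (isOpen_Iio (a := (0 : ℝ)))
  have hconvNeg : Convex ℝ {f : C(Y, ℝ) | ∀ y, f y < 0} := fun f hf g hg s t hs ht hst y =>
    convex_Iio (0 : ℝ) (hf y) (hg y) hs ht hst
  have hdisj : Disjoint {f : C(Y, ℝ) | ∀ y, f y < 0} B :=
    Set.disjoint_left.mpr fun f hf hfB => by
      obtain ⟨y, hy⟩ := hB f hfB
      exact (hf y).not_ge hy
  obtain ⟨Λ, s, hneg, hs⟩ := geometric_hahn_banach_open hconvNeg hopen hconv hdisj
  have hscale : ∀ t > 0, t * Λ (-1) ≤ s := fun t ht => by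
    simpa using (hneg (t • (-1)) fun _ => by simpa using ht).le
  have hpos : ∀ f, 0 ≤ f → 0 ≤ Λ f := fun f hf => by
    refine neg_nonpos.mp (nonpos_of_forall_pos_mul_le (s := s + Λ 1) fun t ht => ?_)
    have hlt := hneg (-(t • f) - 1) fun y => by
      have hfy : 0 ≤ t * f y := mul_nonneg ht.le (hf y)
      simp only [ContinuousMap.sub_apply, ContinuousMap.neg_apply, ContinuousMap.smul_apply,
        smul_eq_mul, ContinuousMap.one_apply]
      linarith
    simp only [map_sub, map_neg, map_smul, smul_eq_mul] at hlt
    linarith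
  have hone : 0 < Λ 1 := by
    obtain ⟨f, hf⟩ := hne
    have hlt : -Λ 1 < s := by simpa using hneg (-1) fun _ => by simp
    have hle := (hs f hf).trans (le_norm_mul_map_one hpos f)
    nlinarith [norm_nonneg f]
  refine ⟨(Λ 1)⁻¹ • Λ, fun f hf => ?_, inv_mul_cancel₀ hone.ne', fun f hf => ?_⟩
  · exact mul_nonneg (inv_nonneg.mpr hone.le) (hpos f hf)
  · exact mul_nonneg (inv_nonneg.mpr hone.le)
      ((nonneg_of_forall_pos_mul_le hscale).trans (hs f hf))

variable [T2Space Y] [MeasurableSpace Y] [BorelSpace Y]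

theorem exists_isFiniteMeasure_integral_eq (Λ : C(Y, ℝ) →ₗ[ℝ] ℝ) (hΛ : ∀ f, 0 ≤ f → 0 ≤ Λ f) :
    ∃ ν : Measure Y, IsFiniteMeasure ν ∧ ∀ f : C(Y, ℝ), ∫ y, f y ∂ν = Λ f := by
  let Λc : C_c(Y, ℝ) →ₚ[ℝ] ℝ := PositiveLinearMap.mk₀
    { toFun f := Λ f.toContinuousMap
      map_add' f g := Λ.map_add f.toContinuousMap g.toContinuousMap
      map_smul' c f := Λ.map_smul c f.toContinuousMap } fun f hf => hΛ _ hf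
  exact ⟨RealRMK.rieszMeasure Λc, inferInstance, fun f => RealRMK.integral_rieszMeasure Λc
    (CompactlySupportedContinuousMap.continuousMapEquiv f)⟩

theorem exists_isProbabilityMeasure_forall_integral_nonneg {B : Set C(Y, ℝ)}
    (hconv : Convex ℝ B) (hne : B.Nonempty) (hB : ∀ f ∈ B, ∃ y, 0 ≤ f y) :
    ∃ ν : Measure Y, IsProbabilityMeasure ν ∧ ∀ f ∈ B, 0 ≤ ∫ y, f y ∂ν := by
  obtain ⟨Λ, hpos, hone, hnonneg⟩ := exists_positive_functional_nonneg_on hconv hne hB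
  obtain ⟨ν, _, hν⟩ := exists_isFiniteMeasure_integral_eq Λ.toLinearMap hpos
  refine ⟨ν, ⟨?_⟩, fun f hf => (hnonneg f hf).trans_eq (hν f).symm⟩
  have hmass : ν.real univ = 1 := by simpa [hone] using hν 1
  exact (ENNReal.toReal_eq_one_iff _).mp hmass

end PositiveFunctional

section Integral

variable {Y : Type*} [TopologicalSpace Y] [CompactSpace Y] [MeasurableSpace Y] [BorelSpace Y]

theorem integrable_of_continuous {f : Y → ℝ} (hf : Continuous f) (μ : Measure Y)
    [IsFiniteMeasure μ] : Integrable f μ :=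
  hf.integrable_of_hasCompactSupport (.of_compactSpace f)

/-- Integration against a finite measure on a compact space, as a continuous linear functional on
continuous functions with the uniform norm. -/
noncomputable def integralCLM (μ : Measure Y) [IsFiniteMeasure μ] : C(Y, ℝ) →L[ℝ] ℝ :=
  L1.integralCLM ∘L ContinuousMap.toLp 1 μ ℝ

theorem integralCLM_apply (μ : Measure Y) [IsFiniteMeasure μ] (f : C(Y, ℝ)) :
    integralCLM μ f = ∫ y, f y ∂μ :=
  (L1.integral_eq _).symm.trans <|
    (L1.integral_eq_integral _).trans <| integral_congr_ae (ContinuousMap.coeFn_toLp μ f)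

theorem exists_integral_le_measureReal_univ_mul [Nonempty Y] (μ : Measure Y) [IsFiniteMeasure μ]
    (f : C(Y, ℝ)) : ∃ y, ∫ x, f x ∂μ ≤ μ.real univ * f y := by
  obtain ⟨y, -, hy⟩ := isCompact_univ.exists_isMaxOn univ_nonempty f.continuous.continuousOn
  refine ⟨y, ?_⟩
  calc ∫ x, f x ∂μ ≤ ∫ _, f y ∂μ :=
        integral_mono (integrable_of_continuous f.continuous μ) (integrable_const _)
          fun x => hy (mem_univ x)
    _ = μ.real univ * f y := by rw [integral_const, smul_eq_mul]

end Integral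

section Cost

variable {Y : Type*} [TopologicalSpace Y]

/-- The functions that are 1-Lipschitz for the transport cost `d`, which need not be symmetric. -/
def costLipschitz (d : C(Y × Y, ℝ)) : Set C(Y, ℝ) :=
  {f | ∀ x y, f x - f y ≤ d (x, y)}

theorem isClosed_costLipschitz (d : C(Y × Y, ℝ)) : IsClosed (costLipschitz d) := by
  simp only [costLipschitz, ofPred_forall]
  exact isClosed_iInter fun x => isClosed_iInter fun y =>
    isClosed_le ((continuous_eval_const x).sub (continuous_eval_const y)) continuous_const

theorem equicontinuous_costLipschitz {d : C(Y × Y, ℝ)} (hself : ∀ x, d (x, x) = 0) :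
    Equicontinuous fun f : costLipschitz d => (f : Y → ℝ) := fun x => by
  refine Metric.equicontinuousAt_of_continuity_modulus (fun y => max (d (x, y)) (d (y, x))) ?_ _
    (.of_forall fun y f => abs_sub_le_iff.mpr
      ⟨(f.2 x y).trans (le_max_left _ _), (f.2 y x).trans (le_max_right _ _)⟩)
  have hcont : Continuous fun y => max (d (x, y)) (d (y, x)) := by fun_prop
  simpa [hself] using hcont.tendsto x

variable [CompactSpace Y]

/-- The infimal convolution of `w` with the cost `d`: for a cost that vanishes on the diagonal and
satisfies the triangle inequality, the largest function below `w` that is 1-Lipschitz. -/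
noncomputable def infConv (d : C(Y × Y, ℝ)) (w : C(Y, ℝ)) : C(Y, ℝ) where
  toFun x := sInf ((fun y => w y + d (x, y)) '' univ)
  continuous_toFun := isCompact_univ.continuous_sInf (by fun_prop)

variable {d : C(Y × Y, ℝ)} {w : C(Y, ℝ)}

theorem infConv_le_add (x y : Y) : infConv d w x ≤ w y + d (x, y) :=
  csInf_le (isCompact_univ.image (by fun_prop)).bddBelow (mem_image_of_mem _ (mem_univ y))

theorem exists_infConv_eq_add (d : C(Y × Y, ℝ)) (w : C(Y, ℝ)) (x : Y) :
    ∃ y, infConv d w x = w y + d (x, y) := by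
  obtain ⟨y, -, hy⟩ := isCompact_univ.exists_sInf_image_eq ⟨x, mem_univ x⟩
    (f := fun y => w y + d (x, y)) (by fun_prop)
  exact ⟨y, hy⟩

theorem infConv_le (hself : ∀ x, d (x, x) = 0) (x : Y) : infConv d w x ≤ w x := by
  simpa [hself] using infConv_le_add (d := d) (w := w) x x

theorem infConv_mem_costLipschitz (htri : ∀ x y z, d (x, z) ≤ d (x, y) + d (y, z)) :
    infConv d w ∈ costLipschitz d := fun x y => by
  obtain ⟨z, hz⟩ := exists_infConv_eq_add d w y
  linarith [infConv_le_add (d := d) (w := w) x z, htri x y z]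

end Cost

section Primal

variable {Y : Type*} [TopologicalSpace Y] [CompactSpace Y]

theorem isCompact_of_isClosed_of_equicontinuous {S : Set C(Y, ℝ)} (hS : IsClosed S)
    (hequi : Equicontinuous fun f : S => (f : Y → ℝ)) {s : Set ℝ} (hs : IsCompact s)
    (hmem : ∀ f ∈ S, ∀ y, f y ∈ s) : IsCompact S := by
  let e := (ContinuousMap.isometryEquivBoundedOfCompact Y ℝ).toHomeomorph
  rw [← e.isCompact_image]
  refine BoundedContinuousFunction.arzela_ascoli₂ s hs _ (e.isClosed_image.mpr hS) ?_ ?_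
  · rintro _ y ⟨f, hf, rfl⟩
    exact hmem f hf y
  · exact hequi.comp fun g : e '' S => ⟨e.symm g, (mem_image_equiv (f := e.toEquiv)).mp g.2⟩

variable {d : C(Y × Y, ℝ)} {K : Set C(Y, ℝ)}

theorem isCompact_inter_costLipschitz_inter_eval_eq_zero (hself : ∀ x, d (x, x) = 0)
    (hK : IsClosed K) (o : Y) : IsCompact (K ∩ costLipschitz d ∩ {f | f o = 0}) := by
  refine isCompact_of_isClosed_of_equicontinuous
    ((hK.inter (isClosed_costLipschitz d)).inter
      (isClosed_eq (continuous_eval_const o) continuous_const))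
    ((equicontinuous_costLipschitz hself).comp
      (inclusion fun _ hf => hf.1.2 :
        ↥(K ∩ costLipschitz d ∩ {f | f o = 0}) → costLipschitz d))
    (isCompact_Icc (a := -‖d‖) (b := ‖d‖)) ?_
  rintro f ⟨⟨-, hf⟩, hfo : f o = 0⟩ y
  constructor <;> linarith [hf y o, hf o y, d.apply_le_norm (y, o), d.apply_le_norm (o, y)]

theorem exists_isMaxOn_inter_costLipschitz [Nonempty Y] (hself : ∀ x, d (x, x) = 0)
    (hK : IsClosed K) (hsub : ∀ f ∈ K, ∀ c : ℝ, f - c • 1 ∈ K)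
    (hne : (K ∩ costLipschitz d).Nonempty) {L : C(Y, ℝ) →L[ℝ] ℝ} (hL : L 1 = 0) :
    ∃ f ∈ K ∩ costLipschitz d, IsMaxOn L (K ∩ costLipschitz d) f := by
  obtain ⟨o⟩ := ‹Nonempty Y›
  have hnormalize : ∀ f ∈ K ∩ costLipschitz d,
      f - f o • 1 ∈ K ∩ costLipschitz d ∩ {g | g o = 0} := fun f hf =>
    ⟨⟨hsub f hf.1 _, fun x y => by simpa using hf.2 x y⟩, by simp⟩
  obtain ⟨f, hf, hmax⟩ :=
    (isCompact_inter_costLipschitz_inter_eval_eq_zero hself hK o).exists_isMaxOn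
      (let ⟨f, hf⟩ := hne; ⟨_, hnormalize f hf⟩) L.continuous.continuousOn
  refine ⟨f, hf.1, fun g hg => ?_⟩
  simpa [hL] using hmax (hnormalize g hg)

end Primal

section Dual

variable {Y : Type*} [TopologicalSpace Y] [CompactSpace Y] [MeasurableSpace Y] [BorelSpace Y]

/-- The continuous function on pairs whose average against a probability measure `P` is the slack
of the dual constraints tested on `v` and `w`, for the plan `γ = μ(Y) P` and the value `S`:
`(∫ v dγ₁ - ∫ v dμ) + (∫ w dν - ∫ w dγ₂) + (S - ∫ d dγ)`. -/
noncomputable def dualSlack (d : C(Y × Y, ℝ)) (μ ν : Measure Y) [IsFiniteMeasure μ]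
    [IsFiniteMeasure ν] (S : ℝ) (v w : C(Y, ℝ)) : C(Y × Y, ℝ) :=
  μ.real univ • (v.comp .fst - w.comp .snd - d) + (integralCLM ν w - integralCLM μ v + S) • 1

variable {d : C(Y × Y, ℝ)} {μ ν : Measure Y} [IsFiniteMeasure μ] [IsFiniteMeasure ν] {S : ℝ}

theorem convex_image2_dualSlack {K : Set C(Y, ℝ)} (hK : Convex ℝ K) :
    Convex ℝ (image2 (dualSlack d μ ν S) K K) := by
  rintro _ ⟨v, hv, w, hw, rfl⟩ _ ⟨v', hv', w', hw', rfl⟩ s t hs ht hst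
  refine ⟨s • v + t • v', hK hv hv' hs ht hst, s • w + t • w', hK hw hw' hs ht hst, ?_⟩
  ext p
  simp only [dualSlack, map_add, map_smul, ContinuousMap.add_apply,
    ContinuousMap.smul_apply, ContinuousMap.sub_apply, ContinuousMap.comp_apply, smul_eq_mul,
    ContinuousMap.one_apply]
  linear_combination (μ.real univ * d p - S) * hst

theorem exists_dualSlack_nonneg [Nonempty Y] (hself : ∀ x, d (x, x) = 0) {v w : C(Y, ℝ)}
    (hS : ∫ y, infConv d w y ∂μ - ∫ y, infConv d w y ∂ν ≤ S) :
    ∃ p, 0 ≤ dualSlack d μ ν S v w p := by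
  obtain ⟨x, hx⟩ := exists_integral_le_measureReal_univ_mul μ (v - infConv d w)
  obtain ⟨y, hy⟩ := exists_infConv_eq_add d w x
  have hle : ∫ z, infConv d w z ∂ν ≤ ∫ z, w z ∂ν :=
    integral_mono (integrable_of_continuous (infConv d w).continuous ν)
      (integrable_of_continuous w.continuous ν) (infConv_le hself)
  refine ⟨(x, y), ?_⟩
  rw [← integralCLM_apply, map_sub, ContinuousMap.sub_apply, hy] at hx
  simp only [← integralCLM_apply] at hle hS
  calc 0 ≤ μ.real univ * (v x - w y - d (x, y)) + (integralCLM ν w - integralCLM μ v + S) := by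
        linarith
    _ = dualSlack d μ ν S v w (x, y) := by simp [dualSlack]

theorem integral_dualSlack [SecondCountableTopology Y] (P : Measure (Y × Y))
    [IsProbabilityMeasure P] (v w : C(Y, ℝ)) :
    ∫ p, dualSlack d μ ν S v w p ∂P =
      μ.real univ * (∫ p, v p.1 ∂P - ∫ p, w p.2 ∂P - ∫ p, d p ∂P) +
        (∫ y, w y ∂ν - ∫ y, v y ∂μ + S) := by
  have hfst : integralCLM P (v.comp .fst) = ∫ p, v p.1 ∂P := integralCLM_apply _ _
  have hsnd : integralCLM P (w.comp .snd) = ∫ p, w p.2 ∂P := integralCLM_apply _ _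
  have hone : integralCLM P 1 = 1 := by simp [integralCLM_apply]
  rw [← hfst, ← hsnd, ← integralCLM_apply, ← integralCLM_apply, ← integralCLM_apply,
    ← integralCLM_apply, dualSlack, map_add, map_smul,
    map_smul, hone, map_sub, map_sub, smul_eq_mul, smul_eq_mul, mul_one]

theorem exists_measure_forall_integral_le [Nonempty Y] [T2Space Y] [SecondCountableTopology Y]
    {K : Set C(Y, ℝ)} (hK : Convex ℝ K) (hKne : K.Nonempty) (hself : ∀ x, d (x, x) = 0)
    (hS : ∀ w ∈ K, ∫ y, infConv d w y ∂μ - ∫ y, infConv d w y ∂ν ≤ S) :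
    ∃ γ : Measure (Y × Y), γ univ = μ univ ∧ ∀ v ∈ K, ∀ w ∈ K,
      ∫ y, v y ∂μ - ∫ y, w y ∂ν + ∫ p, d p ∂γ ≤ ∫ p, v p.1 ∂γ - ∫ p, w p.2 ∂γ + S := by
  obtain ⟨P, _, hP⟩ := exists_isProbabilityMeasure_forall_integral_nonneg
    (convex_image2_dualSlack (d := d) (μ := μ) (ν := ν) (S := S) hK) (hKne.image2 hKne)
    (forall_mem_image2.mpr fun v _ w hw => exists_dualSlack_nonneg hself (hS w hw))
  refine ⟨μ univ • P, by simp, fun v hv w hw => ?_⟩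
  have hslack := hP _ (mem_image2_of_mem hv hw)
  rw [integral_dualSlack] at hslack
  simp only [integral_smul_measure, smul_eq_mul, ← measureReal_def]
  linarith

theorem exists_measure_integral_le_of_cone [Nonempty Y] [T2Space Y] [SecondCountableTopology Y]
    {K : PointedCone ℝ C(Y, ℝ)} (hself : ∀ x, d (x, x) = 0)
    (hS : ∀ w ∈ K, ∫ y, infConv d w y ∂μ - ∫ y, infConv d w y ∂ν ≤ S) :
    ∃ γ : Measure (Y × Y), γ univ = μ univ ∧ (∀ v ∈ K, ∫ y, v y ∂μ ≤ ∫ p, v p.1 ∂γ) ∧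
      (∀ w ∈ K, ∫ p, w p.2 ∂γ ≤ ∫ y, w y ∂ν) ∧ ∫ p, d p ∂γ ≤ S := by
  obtain ⟨γ, hmass, hγ⟩ := exists_measure_forall_integral_le K.convex ⟨0, K.zero_mem⟩ hself hS
  refine ⟨γ, hmass, fun v hv => ?_, fun w hw => ?_, ?_⟩
  · refine sub_nonpos.mp (nonpos_of_forall_pos_mul_le (s := S - ∫ p, d p ∂γ) fun t ht => ?_)
    have hle := hγ (t • v) (K.smul_mem ht.le hv) 0 K.zero_mem
    simp only [ContinuousMap.smul_apply, smul_eq_mul, integral_const_mul, ContinuousMap.zero_apply,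
      integral_zero] at hle
    linarith
  · refine sub_nonpos.mp (nonpos_of_forall_pos_mul_le (s := S - ∫ p, d p ∂γ) fun t ht => ?_)
    have hle := hγ 0 K.zero_mem (t • w) (K.smul_mem ht.le hw)
    simp only [ContinuousMap.smul_apply, smul_eq_mul, integral_const_mul, ContinuousMap.zero_apply,
      integral_zero] at hle
    linarith
  · simpa using hγ 0 K.zero_mem 0 K.zero_mem

theorem exists_measure_integral_le_integral_sub_of_cone [Nonempty Y] [T2Space Y]
    [SecondCountableTopology Y] {K : PointedCone ℝ C(Y, ℝ)} (hK : IsClosed (K : Set C(Y, ℝ)))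
    (hconst : ∀ c : ℝ, c • 1 ∈ K) (hinfConv : ∀ w ∈ K, infConv d w ∈ K)
    (hself : ∀ x, d (x, x) = 0) (htri : ∀ x y z, d (x, z) ≤ d (x, y) + d (y, z))
    (hmass : μ univ = ν univ) :
    ∃ u ∈ ↑K ∩ costLipschitz d, ∃ γ : Measure (Y × Y), γ univ = μ univ ∧
      (∀ v ∈ K, ∫ y, v y ∂μ ≤ ∫ p, v p.1 ∂γ) ∧ (∀ w ∈ K, ∫ p, w p.2 ∂γ ≤ ∫ y, w y ∂ν) ∧
      ∫ p, d p ∂γ ≤ ∫ y, u y ∂μ - ∫ y, u y ∂ν := by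
  have hmem : ∀ w ∈ K, infConv d w ∈ ↑K ∩ costLipschitz d := fun w hw =>
    ⟨hinfConv w hw, infConv_mem_costLipschitz htri⟩
  have hsub : ∀ f ∈ (K : Set C(Y, ℝ)), ∀ c : ℝ, f - c • 1 ∈ (K : Set C(Y, ℝ)) := fun f hf c => by
    simpa [sub_eq_add_neg] using K.add_mem hf (hconst (-c))
  have hone : (integralCLM μ - integralCLM ν) 1 = 0 := by
    simp [integralCLM_apply, measureReal_def, hmass]
  obtain ⟨u, hu, hmax⟩ :=
    exists_isMaxOn_inter_costLipschitz hself hK hsub ⟨_, hmem 0 K.zero_mem⟩ hone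
  refine ⟨u, hu, exists_measure_integral_le_of_cone hself fun w hw => ?_⟩
  simpa [integralCLM_apply] using hmax (hmem w hw)

end Dual

section L1dist

variable {n : ℕ} {x y z : Fin n → ℝ}

theorem l1dist_eq_norm (x y : Fin n → ℝ) : l1dist x y = ‖WithLp.toLp 1 (x - y)‖ := by
  simp [l1dist, PiLp.norm_eq_of_L1]

theorem l1dist_self (x : Fin n → ℝ) : l1dist x x = 0 := by
  simp [l1dist]

theorem l1dist_triangle (x y z : Fin n → ℝ) : l1dist x z ≤ l1dist x y + l1dist y z := by
  simpa only [l1dist_eq_norm, WithLp.toLp_sub] using norm_sub_le_norm_sub_add_norm_sub _ _ _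

theorem continuous_l1dist : Continuous fun p : (Fin n → ℝ) × (Fin n → ℝ) => l1dist p.1 p.2 := by
  unfold l1dist
  fun_prop

theorem l1dist_smul_add_smul_le (x y x' y' : Fin n → ℝ) {s t : ℝ} (hs : 0 ≤ s) (ht : 0 ≤ t) :
    l1dist (s • x + t • x') (s • y + t • y') ≤ s * l1dist x y + t * l1dist x' y' := by
  simp only [l1dist_eq_norm]
  calc ‖WithLp.toLp 1 (s • x + t • x' - (s • y + t • y'))‖
      = ‖s • WithLp.toLp 1 (x - y) + t • WithLp.toLp 1 (x' - y')‖ := by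
        rw [add_sub_add_comm, ← smul_sub, ← smul_sub, WithLp.toLp_add, WithLp.toLp_smul,
          WithLp.toLp_smul]
    _ ≤ ‖s • WithLp.toLp 1 (x - y)‖ + ‖t • WithLp.toLp 1 (x' - y')‖ := norm_add_le _ _
    _ = s * ‖WithLp.toLp 1 (x - y)‖ + t * ‖WithLp.toLp 1 (x' - y')‖ := by
        rw [norm_smul_of_nonneg hs, norm_smul_of_nonneg ht]

theorem l1dist_inf_le_of_le (hxy : x ≤ y) (z : Fin n → ℝ) : l1dist x (x ⊓ z) ≤ l1dist y z := by
  refine Finset.sum_le_sum fun i _ => ?_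
  have hi := hxy i
  rw [Pi.inf_apply]
  grind

/-- The `ℓ¹` transport cost on pairs of points of `X`. -/
noncomputable def l1cost (X : Set (Fin n → ℝ)) : C(X × X, ℝ) where
  toFun p := l1dist (p.1 : Fin n → ℝ) p.2
  continuous_toFun := continuous_l1dist.comp (by fun_prop :
    Continuous fun p : X × X => ((p.1 : Fin n → ℝ), (p.2 : Fin n → ℝ)))

end L1dist

section Cone

variable {E : Type*} [AddCommGroup E] [Module ℝ E] [TopologicalSpace E] [Preorder E] {X : Set E}

/-- The cone of continuous, monotone and convex functions on a convex set `X`, as functions on the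
subtype: convexity is spelled out because `ConvexOn` requires functions on the whole space. -/
def convexMonotoneCone (hX : Convex ℝ X) : PointedCone ℝ C(X, ℝ) where
  carrier := {f | Monotone f ∧ ∀ (x y : X) (s t : ℝ) (hs : 0 ≤ s) (ht : 0 ≤ t) (hst : s + t = 1),
    f ⟨s • x + t • y, hX x.2 y.2 hs ht hst⟩ ≤ s * f x + t * f y}
  zero_mem' := ⟨monotone_const, fun _ _ _ _ _ _ _ => by simp⟩
  add_mem' := fun hf hg => ⟨hf.1.add hg.1, fun x y s t hs ht hst => by
    simp only [ContinuousMap.add_apply]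
    linarith [hf.2 x y s t hs ht hst, hg.2 x y s t hs ht hst]⟩
  smul_mem' := fun c f hf => ⟨hf.1.const_mul c.2, fun x y s t hs ht hst => by
    have hle := mul_le_mul_of_nonneg_left (hf.2 x y s t hs ht hst) c.2
    calc c.1 * f _ ≤ c.1 * (s * f x + t * f y) := hle
      _ = s * (c.1 * f x) + t * (c.1 * f y) := by ring⟩

variable {hX : Convex ℝ X}

theorem smul_one_mem_convexMonotoneCone (c : ℝ) : c • 1 ∈ convexMonotoneCone hX :=
  ⟨fun _ _ _ => le_rfl, fun _ _ s t _ _ hst => by simp [← add_mul, hst]⟩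

theorem isClosed_convexMonotoneCone : IsClosed (convexMonotoneCone hX : Set C(X, ℝ)) := by
  change IsClosed {f : C(X, ℝ) | Monotone f ∧ _}
  simp only [ofPred_and, ofPred_forall]
  exact (isClosed_monotone.preimage continuous_coeFun).inter <|
    isClosed_iInter fun x => isClosed_iInter fun y => isClosed_iInter fun s =>
    isClosed_iInter fun t => isClosed_iInter fun _ => isClosed_iInter fun _ =>
    isClosed_iInter fun _ => isClosed_le (continuous_eval_const _)
      (((continuous_eval_const x).const_mul s).add ((continuous_eval_const y).const_mul t))

end Cone

section ConvexMonotone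

variable {n : ℕ} {X : Set (Fin n → ℝ)} {hX : Convex ℝ X}

theorem infConv_l1cost_mem_convexMonotoneCone [CompactSpace X] (hinf : InfClosed X)
    {w : C(X, ℝ)} (hw : w ∈ convexMonotoneCone hX) :
    infConv (l1cost X) w ∈ convexMonotoneCone hX := by
  refine ⟨fun x y hxy => ?_, fun x y s t hs ht hst => ?_⟩
  · obtain ⟨z, hz⟩ := exists_infConv_eq_add (l1cost X) w y
    let xz : X := ⟨x ⊓ z, hinf x.2 z.2⟩
    calc infConv (l1cost X) w x ≤ w xz + l1cost X (x, xz) := infConv_le_add x xz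
      _ ≤ w z + l1cost X (y, z) :=
        add_le_add (hw.1 (Subtype.coe_le_coe.mp inf_le_right)) (l1dist_inf_le_of_le hxy z)
      _ = infConv (l1cost X) w y := hz.symm
  · obtain ⟨x', hx'⟩ := exists_infConv_eq_add (l1cost X) w x
    obtain ⟨y', hy'⟩ := exists_infConv_eq_add (l1cost X) w y
    have hle := infConv_le_add (d := l1cost X) (w := w) ⟨_, hX x.2 y.2 hs ht hst⟩
      ⟨_, hX x'.2 y'.2 hs ht hst⟩
    have hwle := hw.2 x' y' s t hs ht hst
    have hdist : l1dist (s • x + t • y : Fin n → ℝ) (s • x' + t • y') ≤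
      s * l1cost X (x, x') + t * l1cost X (y, y') := l1dist_smul_add_smul_le _ _ _ _ hs ht
    calc infConv (l1cost X) w ⟨_, hX x.2 y.2 hs ht hst⟩
        ≤ (s * w x' + t * w y') + (s * l1cost X (x, x') + t * l1cost X (y, y')) :=
          hle.trans (add_le_add hwle hdist)
      _ = s * infConv (l1cost X) w x + t * infConv (l1cost X) w y := by rw [hx', hy']; ring

theorem memU_extend {f : C(X, ℝ)} (hf : f ∈ convexMonotoneCone hX) :
    memU X (Function.extend Subtype.val f 0) := by
  have hval : ∀ x (hx : x ∈ X), Function.extend Subtype.val f 0 x = f ⟨x, hx⟩ := fun x hx =>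
    Subtype.val_injective.extend_apply f 0 ⟨x, hx⟩
  refine ⟨?_, fun x hx y hy hxy => ?_, hX, fun x hx y hy s t hs ht hst => ?_⟩
  · rw [continuousOn_iff_continuous_domRestrict]
    exact f.continuous.congr fun x => (hval x x.2).symm
  · rw [hval x hx, hval y hy]
    exact hf.1 hxy
  · rw [hval x hx, hval y hy, hval _ (hX hx hy hs ht hst)]
    exact hf.2 ⟨x, hx⟩ ⟨y, hy⟩ s t hs ht hst

theorem domRestrict_mem_convexMonotoneCone {u : (Fin n → ℝ) → ℝ} (hu : memU X u) :
    ⟨X.domRestrict u, hu.1.domRestrict⟩ ∈ convexMonotoneCone hX :=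
  ⟨fun x y hxy => hu.2.1 x x.2 y y.2 hxy, fun x y _ _ hs ht hst => hu.2.2.2 x.2 y.2 hs ht hst⟩

end ConvexMonotone

section NullComplement

variable {α : Type*} [MeasurableSpace α] {X : Set α}

theorem integral_eq_integral_comap_val {μ : Measure α} (hX : MeasurableSet X) (hμ : μ Xᶜ = 0)
    (u : α → ℝ) : ∫ x, u x ∂μ = ∫ x : X, u x ∂(μ.comap Subtype.val) := by
  rw [integral_subtype_comap hX, Measure.restrict_eq_self_of_ae_mem (mem_ae_iff.mpr hμ)]

theorem comap_val_univ {μ : Measure α} (hX : MeasurableSet X) (hμ : μ Xᶜ = 0) :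
    μ.comap (Subtype.val : X → α) univ = μ univ := by
  rw [comap_subtype_coe_apply hX, image_univ, Subtype.range_coe]
  exact measure_congr (Filter.eventuallyEq_univ.mpr (mem_ae_iff.mpr hμ))

theorem map_fst_compl_eq_zero {γ : Measure (α × α)} (hX : MeasurableSet X)
    (hγ : γ (X ×ˢ X)ᶜ = 0) : γ.map Prod.fst Xᶜ = 0 := by
  rw [Measure.map_apply measurable_fst hX.compl]
  exact measure_mono_null (compl_subset_compl.mpr fun p hp => hp.1) hγ

theorem map_snd_compl_eq_zero {γ : Measure (α × α)} (hX : MeasurableSet X)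
    (hγ : γ (X ×ˢ X)ᶜ = 0) : γ.map Prod.snd Xᶜ = 0 := by
  rw [Measure.map_apply measurable_snd hX.compl]
  exact measure_mono_null (compl_subset_compl.mpr fun p hp => hp.2) hγ

theorem map_prodMap_val_compl_prod (hX : MeasurableSet X) (γ : Measure (X × X)) :
    γ.map (Prod.map Subtype.val Subtype.val) (X ×ˢ X)ᶜ = 0 := by
  rw [Measure.map_apply (by fun_prop) (hX.prod hX).compl]
  have hempty : Prod.map Subtype.val Subtype.val ⁻¹' (X ×ˢ X)ᶜ = (∅ : Set (X × X)) := by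
    ext p
    simp
  rw [hempty, measure_empty]

variable [TopologicalSpace α] [BorelSpace α]

theorem integral_map_val_comp {β : Type*} [MeasurableSpace β] {γ : Measure β}
    (hX : MeasurableSet X) {u : α → ℝ} (hu : ContinuousOn u X) {g : β → X} (hg : Measurable g) :
    ∫ x, u x ∂(γ.map (Subtype.val ∘ g)) = ∫ p, u (g p) ∂γ := by
  rw [← Measure.map_map measurable_subtype_coe hg,
    (MeasurableEmbedding.subtype_coe hX).integral_map]
  exact integral_map hg.aemeasurable hu.domRestrict.measurable.aestronglyMeasurable

variable [T2Space α]

theorem integrable_of_continuousOn_of_compl_null {μ : Measure α} [IsFiniteMeasure μ]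
    (hX : IsCompact X) (hμ : μ Xᶜ = 0) {u : α → ℝ} (hu : ContinuousOn u X) : Integrable u μ := by
  rw [← Measure.restrict_eq_self_of_ae_mem (mem_ae_iff.mpr hμ)]
  exact hu.integrableOn_compact hX

theorem integral_map_fst_sub_integral_map_snd_le [SecondCountableTopology α]
    {γ : Measure (α × α)} [IsFiniteMeasure γ] (hX : IsCompact X) (hγ : γ (X ×ˢ X)ᶜ = 0)
    {u : α → ℝ} (hu : ContinuousOn u X) {c : α × α → ℝ} (hc : ContinuousOn c (X ×ˢ X))
    (hle : ∀ x ∈ X, ∀ y ∈ X, u x - u y ≤ c (x, y)) :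
    ∫ x, u x ∂(γ.map Prod.fst) - ∫ y, u y ∂(γ.map Prod.snd) ≤ ∫ p, c p ∂γ := by
  have hfst : Integrable u (γ.map Prod.fst) :=
    integrable_of_continuousOn_of_compl_null hX (map_fst_compl_eq_zero hX.measurableSet hγ) hu
  have hsnd : Integrable u (γ.map Prod.snd) :=
    integrable_of_continuousOn_of_compl_null hX (map_snd_compl_eq_zero hX.measurableSet hγ) hu
  have hfst' : Integrable (fun p => u p.1) γ := hfst.comp_measurable measurable_fst
  have hsnd' : Integrable (fun p => u p.2) γ := hsnd.comp_measurable measurable_snd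
  rw [integral_map measurable_fst.aemeasurable hfst.aestronglyMeasurable,
    integral_map measurable_snd.aemeasurable hsnd.aestronglyMeasurable,
    ← integral_sub hfst' hsnd']
  refine integral_mono_ae (hfst'.sub hsnd')
    (integrable_of_continuousOn_of_compl_null (hX.prod hX) hγ hc) ?_
  filter_upwards [mem_ae_iff.mpr hγ] with p hp using hle _ hp.1 _ hp.2

end NullComplement

section Duality

variable {n : ℕ}

/-- The order `α ≼_cvx β` on measures on `X` induced by the test functions in `𝒰(X)`. -/
def ConvexOrderLE (X : Set (Fin n → ℝ)) (α β : Measure (Fin n → ℝ)) : Prop :=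
  ∀ v : (Fin n → ℝ) → ℝ, memU X v → ∫ x, v x ∂α ≤ ∫ x, v x ∂β

/-- The relation `γ₁ - γ₂ ≽_cvx μ - ν` between the marginals of `γ` and the signed measure
`μ - ν`, which is encoded by the pair `(μ, ν)`. -/
def MarginalsDominate (X : Set (Fin n → ℝ)) (γ : Measure ((Fin n → ℝ) × (Fin n → ℝ)))
    (μ ν : Measure (Fin n → ℝ)) : Prop :=
  ∀ v : (Fin n → ℝ) → ℝ, memU X v →
    (∫ x, v x ∂μ) - (∫ x, v x ∂ν) ≤ (∫ x, v x ∂(γ.map Prod.fst)) - (∫ x, v x ∂(γ.map Prod.snd))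

/-- The values `∫ u d(μ - ν)` of the primal problem, over `u ∈ 𝒰(X) ∩ ℒ₁(X)`. -/
def primalValues (X : Set (Fin n → ℝ)) (μ ν : Measure (Fin n → ℝ)) : Set ℝ :=
  {r | ∃ u : (Fin n → ℝ) → ℝ, memU X u ∧ memL1 X u ∧ r = (∫ x, u x ∂μ) - (∫ x, u x ∂ν)}

/-- The values `∫ ‖x - y‖₁ dγ` of the dual problem, over the finite measures `γ` on `X × X` with
`γ₁ - γ₂ ≽_cvx μ - ν`. -/
def dualValues (X : Set (Fin n → ℝ)) (μ ν : Measure (Fin n → ℝ)) : Set ℝ :=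
  {r | ∃ γ : Measure ((Fin n → ℝ) × (Fin n → ℝ)), IsFiniteMeasure γ ∧ γ (X ×ˢ X)ᶜ = 0 ∧
    MarginalsDominate X γ μ ν ∧ r = ∫ p, l1dist p.1 p.2 ∂γ}

variable {X : Set (Fin n → ℝ)} {μ ν : Measure (Fin n → ℝ)}

theorem primal_le_dual (hX : IsCompact X) {r s : ℝ} (hr : r ∈ primalValues X μ ν)
    (hs : s ∈ dualValues X μ ν) : r ≤ s := by
  obtain ⟨u, hu, hlip, rfl⟩ := hr
  obtain ⟨γ, _, hγ, hdom, rfl⟩ := hs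
  exact (hdom u hu).trans (integral_map_fst_sub_integral_map_snd_le hX hγ hu.1
    continuous_l1dist.continuousOn hlip)

variable [IsFiniteMeasure μ] [IsFiniteMeasure ν]

theorem exists_optimal_pair (hX : IsCompact X) (hconv : Convex ℝ X) (hinf : InfClosed X)
    (hne : X.Nonempty) (hμ : μ Xᶜ = 0) (hν : ν Xᶜ = 0) (hmass : μ univ = ν univ) :
    ∃ u, memU X u ∧ memL1 X u ∧
      ∃ γ : Measure ((Fin n → ℝ) × (Fin n → ℝ)), γ univ = μ univ ∧ γ (X ×ˢ X)ᶜ = 0 ∧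
        ConvexOrderLE X μ (γ.map Prod.fst) ∧ ConvexOrderLE X (γ.map Prod.snd) ν ∧
        ∫ p, l1dist p.1 p.2 ∂γ ≤ ∫ x, u x ∂μ - ∫ x, u x ∂ν := by
  have : CompactSpace X := isCompact_iff_compactSpace.mp hX
  have : Nonempty X := hne.to_subtype
  have hmeas := hX.measurableSet
  obtain ⟨f, ⟨hf, hlip⟩, γ, hγ, hfst, hsnd, hcost⟩ :=
    exists_measure_integral_le_integral_sub_of_cone (d := l1cost X)
      (isClosed_convexMonotoneCone (hX := hconv)) smul_one_mem_convexMonotoneCone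
      (fun _ hw => infConv_l1cost_mem_convexMonotoneCone hinf hw) (fun x => l1dist_self x.1)
      (fun x y z => l1dist_triangle x.1 y.1 z.1)
      (((comap_val_univ hmeas hμ).trans hmass).trans (comap_val_univ hmeas hν).symm)
  have hval : ∀ x : X, Function.extend Subtype.val f 0 x = f x :=
    Subtype.val_injective.extend_apply f 0
  have hmap : Measurable (Prod.map Subtype.val Subtype.val : X × X → _) := by fun_prop
  refine ⟨Function.extend Subtype.val f 0, memU_extend hf, fun x hx y hy => ?_,
    γ.map (Prod.map Subtype.val Subtype.val), ?_, map_prodMap_val_compl_prod hmeas γ,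
    fun v hv => ?_, fun v hv => ?_, ?_⟩
  · rw [hval ⟨x, hx⟩, hval ⟨y, hy⟩]
    exact hlip ⟨x, hx⟩ ⟨y, hy⟩
  · rw [Measure.map_apply hmap .univ, preimage_univ, hγ, comap_val_univ hmeas hμ]
  · rw [integral_eq_integral_comap_val hmeas hμ, Measure.map_map measurable_fst hmap]
    exact (hfst _ (domRestrict_mem_convexMonotoneCone hv)).trans_eq
      (integral_map_val_comp hmeas hv.1 measurable_fst).symm
  · rw [integral_eq_integral_comap_val hmeas hν, Measure.map_map measurable_snd hmap]
    exact (integral_map_val_comp hmeas hv.1 measurable_snd).trans_le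
      (hsnd _ (domRestrict_mem_convexMonotoneCone hv))
  · rw [integral_eq_integral_comap_val hmeas hμ, integral_eq_integral_comap_val hmeas hν,
      integral_map hmap.aemeasurable continuous_l1dist.aestronglyMeasurable]
    simp only [hval]
    exact hcost

theorem strong_duality_general (hX : IsCompact X) (hconv : Convex ℝ X) (hinf : InfClosed X)
    (hne : X.Nonempty) (hμ : μ Xᶜ = 0) (hν : ν Xᶜ = 0) (hmass : μ univ = ν univ) :
    sSup (primalValues X μ ν) = sInf (dualValues X μ ν) ∧
      sSup (primalValues X μ ν) ∈ primalValues X μ ν ∧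
      sInf (dualValues X μ ν) ∈ dualValues X μ ν ∧
      ∃ γ : Measure ((Fin n → ℝ) × (Fin n → ℝ)), IsFiniteMeasure γ ∧ γ (X ×ˢ X)ᶜ = 0 ∧
        MarginalsDominate X γ μ ν ∧ (∫ p, l1dist p.1 p.2 ∂γ) = sInf (dualValues X μ ν) ∧
        γ.map Prod.fst univ = μ univ ∧ γ.map Prod.snd univ = μ univ ∧
        ConvexOrderLE X μ (γ.map Prod.fst) ∧ ConvexOrderLE X (γ.map Prod.snd) ν := by
  obtain ⟨u, hu, hlip, γ, hmassγ, hγ, hfst, hsnd, hcost⟩ :=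
    exists_optimal_pair hX hconv hinf hne hμ hν hmass
  have hfin : IsFiniteMeasure γ := ⟨hmassγ ▸ measure_lt_top μ univ⟩
  have hdom : MarginalsDominate X γ μ ν := fun v hv => sub_le_sub (hfst v hv) (hsnd v hv)
  have hprimal : ∫ x, u x ∂μ - ∫ x, u x ∂ν ∈ primalValues X μ ν := ⟨u, hu, hlip, rfl⟩
  have hdual : ∫ p, l1dist p.1 p.2 ∂γ ∈ dualValues X μ ν := ⟨γ, hfin, hγ, hdom, rfl⟩
  have heq : ∫ x, u x ∂μ - ∫ x, u x ∂ν = ∫ p, l1dist p.1 p.2 ∂γ :=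
    (primal_le_dual hX hprimal hdual).antisymm hcost
  have hgreatest : IsGreatest (primalValues X μ ν) (∫ p, l1dist p.1 p.2 ∂γ) :=
    ⟨heq ▸ hprimal, fun r hr => primal_le_dual hX hr hdual⟩
  have hleast : IsLeast (dualValues X μ ν) (∫ p, l1dist p.1 p.2 ∂γ) :=
    ⟨hdual, fun s hs => heq ▸ primal_le_dual hX hprimal hs⟩
  rw [hgreatest.csSup_eq, hleast.csInf_eq]
  refine ⟨rfl, hgreatest.1, hleast.1, γ, hfin, hγ, hdom, rfl, ?_, ?_, hfst, hsnd⟩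
  · rw [Measure.map_apply measurable_fst .univ, preimage_univ, hmassγ]
  · rw [Measure.map_apply measurable_snd .univ, preimage_univ, hmassγ]

end Duality

theorem box_eq_Icc {n : ℕ} (a b : Fin n → ℝ) : box a b = Icc a b := by
  ext x
  simp [box, Pi.le_def, forall_and]

theorem infClosed_Icc {α : Type*} [Lattice α] (a b : α) : InfClosed (Icc a b) :=
  fun _ hx _ hy => ⟨le_inf hx.1 hy.1, inf_le_left.trans hx.2⟩

/-- **Strong duality theorem.** For the box `X` and a finite signed Borel measure `μ` on `X`
with `μ(X) = 0` and Jordan decomposition `μ = μp − μn`: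
`sup_{u ∈ 𝒰(X) ∩ ℒ₁(X)} ∫ u dμ = inf_{γ : γ₁ − γ₂ ≽_cvx μ} ∫ ‖x − y‖₁ dγ`;
both the supremum and the infimum are achieved; moreover the infimum is achieved by some `γ*`
with `γ₁*(X) = γ₂*(X) = μ₊(X)`, `γ₁* ≽_cvx μ₊` and `γ₂* ≼_cvx μ₋`. -/
theorem strong_duality {n : ℕ} (a b : Fin n → ℝ) (hab : ∀ i, 0 ≤ a i ∧ a i < b i)
    (μp μn : Measure (Fin n → ℝ)) [IsFiniteMeasure μp] [IsFiniteMeasure μn]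
    (hμp : μp (box a b)ᶜ = 0) (hμn : μn (box a b)ᶜ = 0) (hjordan : μp.MutuallySingular μn)
    (hzero : μp Set.univ = μn Set.univ) :
    let X : Set (Fin n → ℝ) := box a b
    let P : Set ℝ := {r | ∃ u : (Fin n → ℝ) → ℝ, memU X u ∧ memL1 X u ∧
        r = (∫ x, u x ∂μp) - (∫ x, u x ∂μn)}
    let D : Set ℝ := {r | ∃ γ : Measure ((Fin n → ℝ) × (Fin n → ℝ)), IsFiniteMeasure γ ∧
        γ ((X ×ˢ X)ᶜ) = 0 ∧
        (∀ v : (Fin n → ℝ) → ℝ, memU X v →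
          (∫ x, v x ∂μp) - (∫ x, v x ∂μn) ≤
            (∫ x, v x ∂(γ.map Prod.fst)) - (∫ x, v x ∂(γ.map Prod.snd))) ∧
        r = ∫ p, l1dist p.1 p.2 ∂γ}
    sSup P = sInf D ∧ sSup P ∈ P ∧ sInf D ∈ D ∧
      ∃ γ : Measure ((Fin n → ℝ) × (Fin n → ℝ)), IsFiniteMeasure γ ∧
        γ ((X ×ˢ X)ᶜ) = 0 ∧
        (∀ v : (Fin n → ℝ) → ℝ, memU X v →
          (∫ x, v x ∂μp) - (∫ x, v x ∂μn) ≤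
            (∫ x, v x ∂(γ.map Prod.fst)) - (∫ x, v x ∂(γ.map Prod.snd))) ∧
        (∫ p, l1dist p.1 p.2 ∂γ) = sInf D ∧
        γ.map Prod.fst Set.univ = μp Set.univ ∧
        γ.map Prod.snd Set.univ = μp Set.univ ∧
        (∀ v : (Fin n → ℝ) → ℝ, memU X v → (∫ x, v x ∂μp) ≤ ∫ x, v x ∂(γ.map Prod.fst)) ∧
        (∀ v : (Fin n → ℝ) → ℝ, memU X v → (∫ x, v x ∂(γ.map Prod.snd)) ≤ ∫ x, v x ∂μn) := by
  rw [box_eq_Icc] at hμp hμn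
  simpa only [box_eq_Icc] using! strong_duality_general isCompact_Icc (convex_Icc a b)
    (infClosed_Icc a b) (nonempty_Icc.mpr fun i => (hab i).2.le) hμp hμn hzero
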